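/- Assume the sub-critical range q > 1 and (2/3)q + 1 < p < q + 2/3. Let (γ_k) be a sequence of injective, arc-length parametrized curves γ_k ∈ C¹(ℝ/ℤ,ℝⁿ) that converges uniformly to an arc-length parametrized Lipschitz curve γ_∞ ∈ C^{0,1}(ℝ/ℤ,ℝⁿ) which is not injective. Then E_{p,q}(γ_k) → ∞ as k → ∞. -/

import Mathlib

open MeasureTheory Set Filter Topology
open scoped ENNReal

noncomputable section

/-- The area `|a ∧ b|` of the parallelogram spanned by `a, b ∈ ℝⁿ`. -/
def wedgeNorm {n : ℕ} (a b : EuclideanSpace ℝ (Fin n)) : ℝ :=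
  Real.sqrt (‖a‖ ^ 2 * ‖b‖ ^ 2 - (inner ℝ a b : ℝ) ^ 2)

/-- `1 / R^{p,q}(x,y,z) = |(y-x) ∧ (z-x)|^q / (|y-z| |y-x| |z-x|)^p`. -/
def invR {n : ℕ} (p q : ℝ) (x y z : EuclideanSpace ℝ (Fin n)) : ℝ :=
  wedgeNorm (y - x) (z - x) ^ q / (‖y - z‖ * ‖y - x‖ * ‖z - x‖) ^ p

/-- The generalized integral Menger curvature `E_{p,q}` of a closed curve,
modelled by a `1`-periodic function together with its derivative,
the parameter domain `ℝ/ℤ` being represented by `[0,1)`; values in `[0,∞]`. -/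
def menger {n : ℕ} (p q : ℝ) (γ γ' : ℝ → EuclideanSpace ℝ (Fin n)) : ℝ≥0∞ :=
  ∫⁻ u₁ in Ico (0:ℝ) 1, ∫⁻ u₂ in Ico (0:ℝ) 1, ∫⁻ u₃ in Ico (0:ℝ) 1,
    ENNReal.ofReal (‖γ' u₁‖ * ‖γ' u₂‖ * ‖γ' u₃‖ * invR p q (γ u₁) (γ u₂) (γ u₃))

/-- Injectivity of a `1`-periodic curve as a map on `ℝ/ℤ`. -/
def InjCircle {n : ℕ} (γ : ℝ → EuclideanSpace ℝ (Fin n)) : Prop :=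
  ∀ u v : ℝ, γ u = γ v → ∃ k : ℤ, v = u + k

/-- Distance on `ℝ/ℤ`. -/
def circleDist (u v : ℝ) : ℝ := ⨅ k : ℤ, |u - v - (k : ℝ)|

/-- The `ρ`-th power of the Sobolev–Slobodeckiĭ seminorm `[f]_{W^{1+s,ρ}}`
of a periodic function with derivative `f'`; values in `[0,∞]`. -/
def sobSemiPow {n : ℕ} (s ρ : ℝ) (f' : ℝ → EuclideanSpace ℝ (Fin n)) : ℝ≥0∞ :=
  ∫⁻ u in Ico (0:ℝ) 1, ∫⁻ w in Icc (-(1/2) : ℝ) (1/2),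
    ENNReal.ofReal (‖f' (u + w) - f' u‖ ^ ρ / |w| ^ (1 + ρ * s))

/-- The norm `‖f‖_{W^{1+s,ρ}} = ‖f‖_{W^{1,ρ}} + [f]_{W^{1+s,ρ}}`. -/
def sobNorm {n : ℕ} (s ρ : ℝ) (f f' : ℝ → EuclideanSpace ℝ (Fin n)) : ℝ :=
  (∫ u in Ico (0:ℝ) 1, ‖f u‖ ^ ρ) ^ (1/ρ) + (∫ u in Ico (0:ℝ) 1, ‖f' u‖ ^ ρ) ^ (1/ρ)
    + (sobSemiPow s ρ f').toReal ^ (1/ρ)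

/-- `γ` is a closed `W^{1,1}` curve with weak derivative `γ'`:
both are `1`-periodic, `γ'` is measurable and `γ` is the primitive of `γ'`. -/
structure CurvePair {n : ℕ} (γ γ' : ℝ → EuclideanSpace ℝ (Fin n)) : Prop where
  periodic : Function.Periodic γ 1
  periodic' : Function.Periodic γ' 1
  meas' : Measurable γ'
  primitive : ∀ u, γ u = γ 0 + ∫ t in (0:ℝ)..u, γ' t

/-!
If three points within distance `r` of each other span a parallelogram of area `W`, so do, up to a
factor, all points within distance `W / (16 r)` of them. Such a triple therefore contributes at
least a constant times `W ^ (q + 3) / r ^ (3 * p + 3)` to the energy, and bounded energy forces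
`W ≤ K * r ^ (2 + α)` with `α = (3 * p - 2 * q - 3) / (q + 3) > 0`.

This flatness carries a chord-arc estimate from scale `r` to scale `2 * r` with a loss of order
`r ^ α`. The losses form a geometric series, so from the tiny scale at which a `C¹` curve is nearly
straight one climbs to a scale `R` depending only on the energy bound.

Finally, let `γ s`, `γ t` be a closest pair among the points whose parameters are far apart, at
distance `d`. If `d` is small compared with `R`, then `γ t`, `γ (s + d)` and `γ (s - d)`, seen from
`γ s`, are three almost collinear vectors of length about `d`, so two of them point the same way
and end closer than `d` to each other. This contradicts minimality or the chord-arc estimate. So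
curves of bounded energy are uniformly bi-Lipschitz on `ℝ/ℤ`, and their limits are injective.
-/

section Wedge

open Submodule in
lemma norm_sq_mul_inner_starProjection_orthogonal_singleton {E : Type*} [NormedAddCommGroup E]
    [InnerProductSpace ℝ E] (e x y : E) :
    ‖e‖ ^ 2 * inner ℝ ((ℝ ∙ e)ᗮ.starProjection x) ((ℝ ∙ e)ᗮ.starProjection y)
      = ‖e‖ ^ 2 * inner ℝ x y - inner ℝ e x * inner ℝ e y := by
  have hproj : (‖e‖ ^ 2) • (ℝ ∙ e)ᗮ.starProjection y = (‖e‖ ^ 2) • y - inner ℝ e y • e := by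
    rw [starProjection_orthogonal_val, smul_sub]
    exact congrArg _ (smul_starProjection_singleton ℝ y)
  rw [inner_starProjection_left_eq_right,
    starProjection_eq_self_iff.2 (starProjection_apply_mem _ y), ← real_inner_smul_right, hproj,
    inner_sub_right, real_inner_smul_right, real_inner_smul_right, real_inner_comm e x]
  ring

variable {n : ℕ}

lemma wedgeNorm_eq_norm_mul_norm_starProjection (a b : EuclideanSpace ℝ (Fin n)) :
    wedgeNorm a b = ‖a‖ * ‖(ℝ ∙ a)ᗮ.starProjection b‖ := by
  have h := norm_sq_mul_inner_starProjection_orthogonal_singleton a b b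
  rw [real_inner_self_eq_norm_sq, real_inner_self_eq_norm_sq, ← mul_pow, ← sq (inner ℝ a b)] at h
  rw [wedgeNorm, ← h, Real.sqrt_sq (by positivity)]

lemma wedgeNorm_nonneg (a b : EuclideanSpace ℝ (Fin n)) : 0 ≤ wedgeNorm a b :=
  Real.sqrt_nonneg _

lemma wedgeNorm_comm (a b : EuclideanSpace ℝ (Fin n)) : wedgeNorm a b = wedgeNorm b a := by
  rw [wedgeNorm, wedgeNorm, real_inner_comm, mul_comm]

lemma wedgeNorm_self (a : EuclideanSpace ℝ (Fin n)) : wedgeNorm a a = 0 := by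
  rw [wedgeNorm, real_inner_self_eq_norm_sq, ← sq, sub_self, Real.sqrt_zero]

lemma wedgeNorm_le_norm_mul_norm (a b : EuclideanSpace ℝ (Fin n)) :
    wedgeNorm a b ≤ ‖a‖ * ‖b‖ := by
  rw [wedgeNorm_eq_norm_mul_norm_starProjection]
  gcongr
  exact Submodule.norm_starProjection_apply_le _ b

lemma wedgeNorm_add_right_le (a b c : EuclideanSpace ℝ (Fin n)) :
    wedgeNorm a (b + c) ≤ wedgeNorm a b + wedgeNorm a c := by
  simp only [wedgeNorm_eq_norm_mul_norm_starProjection, map_add, ← mul_add]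
  gcongr
  exact norm_add_le _ _

lemma wedgeNorm_add_left_le (a b c : EuclideanSpace ℝ (Fin n)) :
    wedgeNorm (a + b) c ≤ wedgeNorm a c + wedgeNorm b c := by
  rw [wedgeNorm_comm, wedgeNorm_comm a, wedgeNorm_comm b]
  exact wedgeNorm_add_right_le c a b

lemma wedgeNorm_le_wedgeNorm_add (a b a' b' : EuclideanSpace ℝ (Fin n)) :
    wedgeNorm a b ≤ wedgeNorm a' b' + ‖a - a'‖ * ‖b‖ + ‖a'‖ * ‖b - b'‖ := by
  have hleft := wedgeNorm_add_left_le (a - a') a' b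
  have hright := wedgeNorm_add_right_le a' (b - b') b'
  rw [sub_add_cancel] at hleft hright
  linarith [wedgeNorm_le_norm_mul_norm (a - a') b, wedgeNorm_le_norm_mul_norm a' (b - b')]

lemma norm_mul_norm_sub_wedgeNorm_le_abs_inner (a b : EuclideanSpace ℝ (Fin n)) :
    ‖a‖ * ‖b‖ - wedgeNorm a b ≤ |(inner ℝ a b : ℝ)| := by
  have hnn : 0 ≤ ‖a‖ ^ 2 * ‖b‖ ^ 2 - inner ℝ a b ^ 2 := by
    rw [← mul_pow, sub_nonneg, sq_le_sq, abs_of_nonneg (a := ‖a‖ * ‖b‖) (by positivity)]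
    exact abs_real_inner_le_norm a b
  have hsq : wedgeNorm a b ^ 2 = ‖a‖ ^ 2 * ‖b‖ ^ 2 - inner ℝ a b ^ 2 := Real.sq_sqrt hnn
  refine abs_le_of_sq_le_sq' ?_ (abs_nonneg _) |>.2
  rw [sq_abs]
  nlinarith [wedgeNorm_le_norm_mul_norm a b, wedgeNorm_nonneg a b]

lemma inner_mul_inner_sub_wedgeNorm_mul_wedgeNorm_le (e x y : EuclideanSpace ℝ (Fin n)) :
    inner ℝ e x * inner ℝ e y - wedgeNorm e x * wedgeNorm e y ≤ ‖e‖ ^ 2 * inner ℝ x y := by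
  have hproj := norm_sq_mul_inner_starProjection_orthogonal_singleton e x y
  have hCS := neg_le_of_abs_le (abs_real_inner_le_norm
    ((ℝ ∙ e)ᗮ.starProjection x) ((ℝ ∙ e)ᗮ.starProjection y))
  have := mul_le_mul_of_nonneg_left hCS (sq_nonneg ‖e‖)
  rw [wedgeNorm_eq_norm_mul_norm_starProjection, wedgeNorm_eq_norm_mul_norm_starProjection]
  linarith

variable {l : ℝ} {x y z : EuclideanSpace ℝ (Fin n)}

lemma le_abs_inner_of_wedgeNorm_le (hl : 0 ≤ l) (hx : 1 / 2 * l ≤ ‖x‖) (hy : 1 / 2 * l ≤ ‖y‖)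
    (hxy : wedgeNorm x y ≤ 1 / 8 * l ^ 2) : 1 / 8 * l ^ 2 ≤ |(inner ℝ x y : ℝ)| := by
  have : 1 / 2 * l * (1 / 2 * l) ≤ ‖x‖ * ‖y‖ := by gcongr
  linarith [norm_mul_norm_sub_wedgeNorm_le_abs_inner x y]

lemma inner_neg_of_wedgeNorm_le (hl : 0 < l) (hx : ‖x‖ ∈ Icc (1 / 2 * l) l)
    (hy : ‖y‖ ∈ Icc (1 / 2 * l) l) (hdist : l ≤ ‖x - y‖) (hxy : wedgeNorm x y ≤ 1 / 8 * l ^ 2) :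
    inner ℝ x y < (0 : ℝ) := by
  by_contra! hinner
  have hlower := norm_mul_norm_sub_wedgeNorm_le_abs_inner x y
  rw [abs_of_nonneg hinner] at hlower
  have hdiff : (‖x‖ - ‖y‖) ^ 2 ≤ (1 / 2 * l) ^ 2 :=
    sq_le_sq' (by linarith [hx.1, hy.2]) (by linarith [hx.2, hy.1])
  have hsq : l ^ 2 ≤ ‖x - y‖ ^ 2 := by gcongr
  nlinarith [norm_sub_sq_real x y]

lemma exists_norm_sub_lt_of_wedgeNorm_le (hl : 0 < l) (hx : ‖x‖ ∈ Icc (1 / 2 * l) l)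
    (hy : ‖y‖ ∈ Icc (1 / 2 * l) l) (hz : ‖z‖ ∈ Icc (1 / 2 * l) l)
    (hxy : wedgeNorm x y ≤ 1 / 8 * l ^ 2) (hxz : wedgeNorm x z ≤ 1 / 8 * l ^ 2)
    (hyz : wedgeNorm y z ≤ 1 / 8 * l ^ 2) :
    ‖x - y‖ < l ∨ ‖x - z‖ < l ∨ ‖y - z‖ < l := by
  by_contra! ⟨hxy', hxz', hyz'⟩
  have ixy := inner_neg_of_wedgeNorm_le hl hx hy hxy' hxy
  have ixz := inner_neg_of_wedgeNorm_le hl hx hz hxz' hxz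
  have iyz := inner_neg_of_wedgeNorm_le hl hy hz hyz' hyz
  have hle : wedgeNorm x y * wedgeNorm x z ≤ inner ℝ x y * inner ℝ x z := by
    rw [← abs_of_pos (mul_pos_of_neg_of_neg ixy ixz), abs_mul]
    exact mul_le_mul (hxy.trans (le_abs_inner_of_wedgeNorm_le hl.le hx.1 hy.1 hxy))
      (hxz.trans (le_abs_inner_of_wedgeNorm_le hl.le hx.1 hz.1 hxz)) (wedgeNorm_nonneg x z)
      (abs_nonneg _)
  have hx0 : 0 < ‖x‖ := by linarith [hx.1]
  nlinarith [inner_mul_inner_sub_wedgeNorm_mul_wedgeNorm_le x y z,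
    mul_pos (pow_pos hx0 2) (neg_pos.2 iyz)]

lemma mul_le_norm_sub_of_inner_neg {a ε : ℝ} (ha : 1 / 2 ≤ a) (hε : ε ≤ 1 / 8) (hl : 0 < l)
    (hx : a * l ≤ ‖x‖) (hy : a * l ≤ ‖y‖) (hxy : wedgeNorm x y ≤ ε * l ^ 2)
    (hinner : inner ℝ x y < (0 : ℝ)) : (a - ε) * (2 * l) ≤ ‖x - y‖ := by
  have hε0 : 0 ≤ ε := nonneg_of_mul_nonneg_left ((wedgeNorm_nonneg x y).trans hxy) (by positivity)
  have hlower := norm_mul_norm_sub_wedgeNorm_le_abs_inner x y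
  rw [abs_of_neg hinner] at hlower
  have hsum : l ≤ ‖x‖ + ‖y‖ := by nlinarith
  have hsq : (‖x‖ + ‖y‖ - 2 * ε * l) ^ 2 ≤ ‖x - y‖ ^ 2 :=
    calc (‖x‖ + ‖y‖ - 2 * ε * l) ^ 2 ≤ (‖x‖ + ‖y‖) ^ 2 - 2 * (ε * l ^ 2) := by
          nlinarith [mul_nonneg (mul_nonneg hε0 hl.le) (sub_nonneg.2 hsum),
            mul_nonneg (mul_nonneg hε0 (sq_nonneg l)) (sub_nonneg.2 hε)]
      _ ≤ ‖x - y‖ ^ 2 := by nlinarith [norm_sub_sq_real x y]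
  linarith [(abs_le_of_sq_le_sq' hsq (norm_nonneg _)).2]

end Wedge

section Circle

lemma circleDist_eq_dist (u v : ℝ) : circleDist u v = dist (u : UnitAddCircle) v := by
  rw [dist_eq_norm, ← QuotientAddGroup.mk_sub, UnitAddCircle.norm_eq]
  exact le_antisymm (ciInf_le ⟨0, forall_mem_range.2 fun _ => abs_nonneg _⟩ _)
    (le_ciInf (round_le _))

lemma circleDist_le_abs_sub (u v : ℝ) : circleDist u v ≤ |u - v| := by
  simpa [circleDist] using ciInf_le (f := fun k : ℤ => |u - v - k|)
    ⟨0, forall_mem_range.2 fun _ => abs_nonneg _⟩ 0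

lemma circleDist_triangle (u v w : ℝ) : circleDist u w ≤ circleDist u v + circleDist v w := by
  simpa only [circleDist_eq_dist] using dist_triangle (u : UnitAddCircle) v w

lemma circleDist_le_one (u v : ℝ) : circleDist u v ≤ 1 := by
  have h := AddCircle.norm_le_half_period 1 one_ne_zero (x := ((u - v : ℝ) : UnitAddCircle))
  rw [abs_one, AddCircle.coe_sub, ← dist_eq_norm, ← circleDist_eq_dist] at h
  linarith

lemma exists_abs_sub_intCast_sub_eq_circleDist (u v : ℝ) :
    ∃ k : ℤ, |u - k - v| = circleDist u v := by
  refine ⟨round (u - v), ?_⟩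
  rw [circleDist_eq_dist, dist_eq_norm, ← QuotientAddGroup.mk_sub, UnitAddCircle.norm_eq,
    sub_right_comm]

lemma circleDist_eq_zero_iff {u v : ℝ} : circleDist u v = 0 ↔ ∃ k : ℤ, v = u + k := by
  constructor
  · intro h
    obtain ⟨k, hk⟩ := exists_abs_sub_intCast_sub_eq_circleDist u v
    refine ⟨-k, ?_⟩
    rw [h, abs_eq_zero] at hk
    push_cast
    linarith
  · rintro ⟨k, rfl⟩
    simp [circleDist_eq_dist]

lemma volume_Ico_inter_circleDist_le (u : ℝ) {η : ℝ} (hη : 2 * η ≤ 1) :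
    volume (Ico 0 1 ∩ {t | circleDist t u ≤ η}) = ENNReal.ofReal (2 * η) := by
  have hball : {t | circleDist t u ≤ η} =
      ((↑) : ℝ → UnitAddCircle) ⁻¹' Metric.closedBall (u : UnitAddCircle) η := by
    ext t
    simp [circleDist_eq_dist]
  have hmk := (UnitAddCircle.measurePreserving_mk 0).measure_preimage
    (Metric.isClosed_closedBall (x := (u : UnitAddCircle)) (ε := η)).nullMeasurableSet
  rwa [zero_add, ← Measure.restrict_congr_set Ico_ae_eq_Ioc,
    Measure.restrict_apply' measurableSet_Ico, AddCircle.volume_closedBall, min_eq_right hη,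
    ← hball, inter_comm] at hmk

lemma mul_le_setLIntegral_Ico_of_circleDist_le {c : ℝ≥0∞} {f : ℝ → ℝ≥0∞} (u : ℝ) {η : ℝ}
    (hη : 2 * η ≤ 1) (hf : ∀ t, circleDist t u ≤ η → c ≤ f t) :
    c * ENNReal.ofReal (2 * η) ≤ ∫⁻ t in Ico (0 : ℝ) 1, f t := by
  have hmeas : MeasurableSet {t | circleDist t u ≤ η} := by
    simp only [circleDist_eq_dist]
    exact (isClosed_le (by fun_prop) continuous_const).measurableSet
  calc c * ENNReal.ofReal (2 * η)
      = ∫⁻ _ in Ico (0 : ℝ) 1 ∩ {t | circleDist t u ≤ η}, c := by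
        rw [setLIntegral_const, volume_Ico_inter_circleDist_le u hη]
    _ ≤ ∫⁻ t in Ico (0 : ℝ) 1 ∩ {t | circleDist t u ≤ η}, f t :=
        setLIntegral_mono' (measurableSet_Ico.inter hmeas) fun t ht => hf t ht.2
    _ ≤ ∫⁻ t in Ico (0 : ℝ) 1, f t := lintegral_mono_set inter_subset_left

variable {X : Type*}

lemma uniformContinuous_of_periodic [UniformSpace X] {f : ℝ → X} (hf : Continuous f)
    (hper : Function.Periodic f 1) : UniformContinuous f := by
  have hmk : UniformContinuous ((↑) : ℝ → UnitAddCircle) :=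
    uniformContinuous_addMonoidHom_of_continuous (f := QuotientAddGroup.mk' _)
      (AddCircle.continuous_mk' 1)
  have hlift : Continuous (hper.lift : UnitAddCircle → X) := continuous_coinduced_dom.2 hf
  exact (CompactSpace.uniformContinuous_of_continuous hlift).comp hmk

variable [PseudoMetricSpace X]

lemma dist_le_mul_circleDist {K : NNReal} {γ : ℝ → X} (hper : Function.Periodic γ 1)
    (hlip : LipschitzWith K γ) (u v : ℝ) : dist (γ u) (γ v) ≤ K * circleDist u v := by
  obtain ⟨k, hk⟩ := exists_abs_sub_intCast_sub_eq_circleDist u v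
  rw [← hk, ← Real.dist_eq, ← hper.sub_int_mul_eq k, mul_one]
  exact hlip.dist_le_mul _ _

lemma exists_forall_dist_le_dist_of_le_circleDist {γ : ℝ → X} (hper : Function.Periodic γ 1)
    (hγ : Continuous γ) {δ u v : ℝ} (huv : δ ≤ circleDist u v) :
    ∃ s t, δ ≤ circleDist s t ∧
      ∀ x y, δ ≤ circleDist x y → dist (γ s) (γ t) ≤ dist (γ x) (γ y) := by
  have hlift : Continuous (hper.lift : UnitAddCircle → X) := continuous_coinduced_dom.2 hγ
  have hcompact : IsCompact {z : UnitAddCircle × UnitAddCircle | δ ≤ dist z.1 z.2} :=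
    (isClosed_le continuous_const (by fun_prop)).isCompact
  simp only [circleDist_eq_dist] at huv ⊢
  obtain ⟨⟨s', t'⟩, hst, hmin⟩ := hcompact.exists_isMinOn ⟨(↑u, ↑v), huv⟩
    (f := fun z => dist (hper.lift z.1) (hper.lift z.2)) (by fun_prop)
  obtain ⟨s, rfl⟩ := QuotientAddGroup.mk_surjective s'
  obtain ⟨t, rfl⟩ := QuotientAddGroup.mk_surjective t'
  exact ⟨s, t, hst, fun x y hxy => hmin (a := (↑x, ↑y)) hxy⟩

end Circle

section LowerBound

variable {n : ℕ} {p q : ℝ}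

lemma le_invR (hp : 0 ≤ p) (hq : 0 < q) {x y z : EuclideanSpace ℝ (Fin n)} {A ρ : ℝ}
    (hy : ‖y - x‖ ≤ ρ) (hz : ‖z - x‖ ≤ ρ) (hA : 0 ≤ A) (hAw : A ≤ wedgeNorm (y - x) (z - x)) :
    A ^ q / (2 * ρ ^ 3) ^ p ≤ invR p q x y z := by
  rcases hA.eq_or_lt with rfl | hpos
  · rw [Real.zero_rpow hq.ne', zero_div]
    exact div_nonneg (Real.rpow_nonneg (wedgeNorm_nonneg _ _) _) (by positivity)
  have hyz_pos : 0 < ‖y - z‖ := by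
    rw [norm_sub_pos_iff]
    rintro rfl
    exact (hpos.trans_le hAw).ne' (wedgeNorm_self _)
  have hprod_pos : 0 < ‖y - z‖ * ‖y - x‖ * ‖z - x‖ := by
    rw [mul_assoc]
    exact mul_pos hyz_pos (hpos.trans_le (hAw.trans (wedgeNorm_le_norm_mul_norm _ _)))
  have hyz : ‖y - z‖ ≤ 2 * ρ := by
    rw [← sub_sub_sub_cancel_right y z x]
    linarith [norm_sub_le (y - x) (z - x)]
  have hprod : ‖y - z‖ * ‖y - x‖ * ‖z - x‖ ≤ 2 * ρ ^ 3 :=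
    calc ‖y - z‖ * ‖y - x‖ * ‖z - x‖ ≤ 2 * ρ * ρ * ρ := by
          have := (norm_nonneg _).trans hy
          gcongr
      _ = 2 * ρ ^ 3 := by ring
  have hw0 := wedgeNorm_nonneg (y - x) (z - x)
  rw [invR]
  gcongr

lemma le_invR_of_norm_sub_le (hp : 0 ≤ p) (hq : 0 < q)
    {x y z x' y' z' : EuclideanSpace ℝ (Fin n)} {r η : ℝ} (hr : 0 < r)
    (hy : ‖y - x‖ ≤ r) (hz : ‖z - x‖ ≤ r) (hη : 16 * η * r ≤ wedgeNorm (y - x) (z - x))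
    (hxx' : ‖x - x'‖ ≤ η) (hyy' : ‖y - y'‖ ≤ η) (hzz' : ‖z - z'‖ ≤ η) :
    (wedgeNorm (y - x) (z - x) / 2) ^ q / (16 * r ^ 3) ^ p ≤ invR p q x' y' z' := by
  have hW0 := wedgeNorm_nonneg (y - x) (z - x)
  have hη0 : 0 ≤ η := (norm_nonneg _).trans hxx'
  have hW : wedgeNorm (y - x) (z - x) ≤ r * r :=
    (wedgeNorm_le_norm_mul_norm _ _).trans (by gcongr)
  have hηr : 16 * η ≤ r := le_of_mul_le_mul_right (hη.trans hW) hr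
  have hdy : ‖y - x - (y' - x')‖ ≤ 2 * η := by
    rw [sub_sub_sub_comm]
    linarith [norm_sub_le (y - y') (x - x')]
  have hdz : ‖z - x - (z' - x')‖ ≤ 2 * η := by
    rw [sub_sub_sub_comm]
    linarith [norm_sub_le (z - z') (x - x')]
  have hy' : ‖y' - x'‖ ≤ 2 * r := by
    linarith [norm_le_norm_add_norm_sub (y - x) (y' - x')]
  have hz' : ‖z' - x'‖ ≤ 2 * r := by
    linarith [norm_le_norm_add_norm_sub (z - x) (z' - x')]
  have hwedge : wedgeNorm (y - x) (z - x) / 2 ≤ wedgeNorm (y' - x') (z' - x') := by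
    have h := wedgeNorm_le_wedgeNorm_add (y - x) (z - x) (y' - x') (z' - x')
    have h₁ : ‖y - x - (y' - x')‖ * ‖z - x‖ ≤ 2 * η * r := by gcongr
    have h₂ : ‖y' - x'‖ * ‖z - x - (z' - x')‖ ≤ 2 * r * (2 * η) := by gcongr
    linarith
  have hle := le_invR hp hq hy' hz' (by positivity) hwedge
  rwa [show 2 * (2 * r) ^ 3 = 16 * r ^ 3 by ring] at hle

lemma le_menger (hp : 0 ≤ p) (hq : 0 < q) {γ γ' : ℝ → EuclideanSpace ℝ (Fin n)}
    (hper : Function.Periodic γ 1) (hlip : LipschitzWith 1 γ) (hγ' : ∀ u, ‖γ' u‖ = 1)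
    {u v w r : ℝ} (hr : r ∈ Ioc 0 1) (hv : ‖γ v - γ u‖ ≤ r) (hw : ‖γ w - γ u‖ ≤ r) :
    ENNReal.ofReal ((wedgeNorm (γ v - γ u) (γ w - γ u) / 2) ^ q / (16 * r ^ 3) ^ p *
      (wedgeNorm (γ v - γ u) (γ w - γ u) / (8 * r)) ^ 3) ≤ menger p q γ γ' := by
  have hr0 := hr.1
  have hW0 := wedgeNorm_nonneg (γ v - γ u) (γ w - γ u)
  have hWr : wedgeNorm (γ v - γ u) (γ w - γ u) ≤ r * r :=
    (wedgeNorm_le_norm_mul_norm _ _).trans (by gcongr)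
  obtain ⟨η, hη⟩ : ∃ η, 16 * η * r = wedgeNorm (γ v - γ u) (γ w - γ u) :=
    ⟨wedgeNorm (γ v - γ u) (γ w - γ u) / (16 * r), by field_simp⟩
  have hη0 : 0 ≤ η := nonneg_of_mul_nonneg_left (by linarith) hr0
  have hη1 : 2 * η ≤ 1 := by nlinarith [hr.2]
  have hclose {s t : ℝ} (hst : circleDist s t ≤ η) : ‖γ t - γ s‖ ≤ η := by
    rw [norm_sub_rev, ← dist_eq_norm]
    simpa using (dist_le_mul_circleDist hper hlip s t).trans (by simpa using hst)
  have h2η : wedgeNorm (γ v - γ u) (γ w - γ u) / (8 * r) = 2 * η := by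
    rw [← hη]
    field_simp
    ring
  rw [h2η, ENNReal.ofReal_mul (by positivity), ENNReal.ofReal_pow (by positivity),
    pow_three' (ENNReal.ofReal (2 * η)), ← mul_assoc, ← mul_assoc]
  refine mul_le_setLIntegral_Ico_of_circleDist_le u hη1 fun u' hu' =>
    mul_le_setLIntegral_Ico_of_circleDist_le v hη1 fun v' hv' =>
      mul_le_setLIntegral_Ico_of_circleDist_le w hη1 fun w' hw' => ENNReal.ofReal_le_ofReal ?_
  rw [hγ', hγ', hγ', one_mul, one_mul, one_mul]
  exact le_invR_of_norm_sub_le hp hq hr0 hv hw hη.le (hclose hu') (hclose hv') (hclose hw')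

end LowerBound

section Flatness

variable {n : ℕ}

/-- Jones-type flatness of a curve at scale `r`, measured by areas: each triple of points of the
curve in which two points lie at distance at most `r` from the third spans a parallelogram of area
at most `ε r²`. -/
def FlatAtScale (γ : ℝ → EuclideanSpace ℝ (Fin n)) (ε r : ℝ) : Prop :=
  ∀ u v w, ‖γ v - γ u‖ ≤ r → ‖γ w - γ u‖ ≤ r → wedgeNorm (γ v - γ u) (γ w - γ u) ≤ ε * r ^ 2

lemma FlatAtScale.mono {γ : ℝ → EuclideanSpace ℝ (Fin n)} {ε ε' r : ℝ} (h : FlatAtScale γ ε r)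
    (hε : ε ≤ ε') : FlatAtScale γ ε' r :=
  fun u v w hv hw => (h u v w hv hw).trans (by gcongr)

lemma le_mul_rpow_of_energy_le {p q M r W : ℝ} (hq : 0 ≤ q) (hM : 0 ≤ M) (hr : 0 < r) (hW : 0 ≤ W)
    (h : (W / 2) ^ q / (16 * r ^ 3) ^ p * (W / (8 * r)) ^ 3 ≤ M) :
    W ≤ (M * 16 ^ p * 2 ^ q * 8 ^ 3) ^ (3 + q)⁻¹ * r ^ ((3 * p - 2 * q - 3) / (3 + q)) * r ^ 2 := by
  have hpow : W ^ (3 + q) ≤ M * 16 ^ p * 2 ^ q * 8 ^ 3 * r ^ (3 * p + 3) := by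
    rw [Real.div_rpow hW two_pos.le, Real.mul_rpow (by norm_num) (by positivity),
      ← Real.rpow_natCast_mul hr.le, div_pow, div_div, div_mul_div_comm,
      div_le_iff₀ (by positivity)] at h
    have hWpow : W ^ (3 + q) = W ^ q * W ^ 3 := by
      rw [add_comm]; exact_mod_cast Real.rpow_add_natCast' hW (n := 3) (by positivity)
    have hrpow : r ^ (3 * p + 3) = r ^ (3 * p) * r ^ 3 := by
      exact_mod_cast Real.rpow_add_natCast hr.ne' (3 * p) 3
    rw [hWpow, hrpow]
    exact h.trans_eq (by push_cast; ring)
  have hexp : (3 * p + 3) * (3 + q)⁻¹ = (3 * p - 2 * q - 3) / (3 + q) + 2 := by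
    field_simp
    ring
  have hrpow : (r ^ (3 * p + 3)) ^ (3 + q)⁻¹ = r ^ ((3 * p - 2 * q - 3) / (3 + q)) * r ^ 2 := by
    rw [← Real.rpow_mul hr.le, hexp]
    exact_mod_cast Real.rpow_add_natCast hr.ne' _ 2
  rw [mul_assoc, ← hrpow, ← Real.mul_rpow (by positivity) (by positivity)]
  exact (Real.le_rpow_inv_iff_of_pos hW (by positivity) (by positivity)).2 hpow

lemma flatAtScale_of_menger_le {p q : ℝ} (hp : 0 ≤ p) (hq : 0 < q) {M : NNReal}
    {γ γ' : ℝ → EuclideanSpace ℝ (Fin n)} (hper : Function.Periodic γ 1) (hlip : LipschitzWith 1 γ)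
    (hγ' : ∀ u, ‖γ' u‖ = 1) (hM : menger p q γ γ' ≤ M) {r : ℝ} (hr : r ∈ Ioc 0 1) :
    FlatAtScale γ ((M * 16 ^ p * 2 ^ q * 8 ^ 3) ^ (3 + q)⁻¹ *
      r ^ ((3 * p - 2 * q - 3) / (3 + q))) r := by
  intro u v w hv hw
  have h := (le_menger hp hq hper hlip hγ' hr hv hw).trans hM
  exact le_mul_rpow_of_energy_le hq.le M.2 hr.1 (wedgeNorm_nonneg _ _)
    (ENNReal.ofReal_le_coe.1 h)

end Flatness

/-- The chord-arc estimate with constant `a`, restricted to arcs of parameter length at most `r`. -/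
def ChordArc {E : Type*} [SeminormedAddCommGroup E] (γ : ℝ → E) (a r : ℝ) : Prop :=
  ∀ s t, |s - t| ≤ r → a * |s - t| ≤ ‖γ s - γ t‖

namespace ChordArc

section Basic

variable {E : Type*} [SeminormedAddCommGroup E] {γ : ℝ → E} {a b r : ℝ}

lemma mono (h : ChordArc γ a r) (hab : b ≤ a) : ChordArc γ b r :=
  fun s t hst => (by gcongr : b * |s - t| ≤ a * |s - t|).trans (h s t hst)

lemma norm_sub_mem_Icc (h : ChordArc γ a r) (hlip : LipschitzWith 1 γ) {s t l : ℝ}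
    (hst : |s - t| = l) (hl : l ≤ r) : ‖γ s - γ t‖ ∈ Icc (a * l) l := by
  subst hst
  exact ⟨h s t hl, by simpa [dist_eq_norm] using hlip.dist_le_mul s t⟩

lemma mul_circleDist_le (h : ChordArc γ a r) (hper : Function.Periodic γ 1) {u v : ℝ}
    (huv : circleDist u v ≤ r) : a * circleDist u v ≤ ‖γ u - γ v‖ := by
  obtain ⟨k, hk⟩ := exists_abs_sub_intCast_sub_eq_circleDist u v
  rw [← hk] at huv ⊢
  rw [← hper.sub_int_mul_eq k, mul_one]
  exact h _ _ huv

end Basic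

lemma exists_of_uniformContinuous_deriv {E : Type*} [NormedAddCommGroup E] [NormedSpace ℝ E]
    {γ : ℝ → E} (hγ : Differentiable ℝ γ) (hderiv : UniformContinuous (deriv γ))
    (harc : ∀ u, ‖deriv γ u‖ = 1) {a : ℝ} (ha : a < 1) : ∃ r > 0, ChordArc γ a r := by
  obtain ⟨δ, hδ, hunif⟩ := Metric.uniformContinuous_iff.1 hderiv (1 - a) (sub_pos.2 ha)
  refine ⟨δ / 2, half_pos hδ, fun s t hst => ?_⟩
  have hder (x : ℝ) : HasDerivAt (fun x => γ x - x • deriv γ s) (deriv γ x - deriv γ s) x := by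
    simpa using (hγ x).hasDerivAt.fun_sub ((hasDerivAt_id x).smul_const (deriv γ s))
  have hbound : ∀ x ∈ uIcc s t, ‖deriv γ x - deriv γ s‖ ≤ 1 - a := fun x hx => by
    rw [← dist_eq_norm]
    refine (hunif ?_).le
    rw [Real.dist_eq]
    linarith [abs_sub_left_of_mem_uIcc hx, abs_sub_comm s t]
  have hmean := (convex_uIcc s t).norm_image_sub_le_of_norm_hasDerivWithin_le
    (fun x _ => (hder x).hasDerivWithinAt) hbound left_mem_uIcc right_mem_uIcc
  have htangent : γ t - t • deriv γ s - (γ s - s • deriv γ s)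
      = (s - t) • deriv γ s - (γ s - γ t) := by
    rw [sub_smul]
    abel
  rw [htangent, Real.norm_eq_abs, abs_sub_comm t s] at hmean
  have hnorm : ‖(s - t) • deriv γ s‖ = |s - t| := by
    rw [norm_smul, harc, mul_one, Real.norm_eq_abs]
  linarith [norm_sub_norm_le ((s - t) • deriv γ s) (γ s - γ t)]

section Flat

variable {n : ℕ} {γ : ℝ → EuclideanSpace ℝ (Fin n)} {a r : ℝ}

-- For `l ≤ r / 2` the chord-arc estimate between the two endpoints excludes a sharp turn at `m`;
-- flatness keeps the inner product away from zero, so its sign persists up to `l = r`.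
lemma inner_opposite_neg (h : ChordArc γ (1 / 2) r) (hlip : LipschitzWith 1 γ)
    (hflat : ∀ l ∈ Ioc 0 r, FlatAtScale γ (1 / 8) l) (m : ℝ) {l : ℝ} (hl : l ∈ Ioc 0 r) :
    inner ℝ (γ (m - l) - γ m) (γ (m + l) - γ m) < (0 : ℝ) := by
  have hleft {l : ℝ} (hl : l ∈ Ioc 0 r) : ‖γ (m - l) - γ m‖ ∈ Icc (1 / 2 * l) l :=
    h.norm_sub_mem_Icc hlip (by simp [abs_of_pos hl.1]) hl.2
  have hright {l : ℝ} (hl : l ∈ Ioc 0 r) : ‖γ (m + l) - γ m‖ ∈ Icc (1 / 2 * l) l :=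
    h.norm_sub_mem_Icc hlip (by simp [abs_of_pos hl.1]) hl.2
  have hwedge {l : ℝ} (hl : l ∈ Ioc 0 r) :
      wedgeNorm (γ (m - l) - γ m) (γ (m + l) - γ m) ≤ 1 / 8 * l ^ 2 :=
    hflat l hl m (m - l) (m + l) (hleft hl).2 (hright hl).2
  have hcont : Continuous fun l => (inner ℝ (γ (m - l) - γ m) (γ (m + l) - γ m) : ℝ) := by
    have := hlip.continuous
    fun_prop
  have hsmall {l : ℝ} (hl : l ∈ Ioc 0 r) (hlr : l ≤ r / 2) :
      inner ℝ (γ (m - l) - γ m) (γ (m + l) - γ m) < (0 : ℝ) := by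
    refine inner_neg_of_wedgeNorm_le hl.1 (hleft hl) (hright hl) ?_ (hwedge hl)
    have hends : |m - l - (m + l)| = 2 * l := by
      rw [show m - l - (m + l) = -(2 * l) by ring, abs_neg, abs_of_pos (by linarith [hl.1])]
    rw [sub_sub_sub_cancel_right]
    linarith [(h.norm_sub_mem_Icc hlip hends (by linarith)).1]
  have hmin : min l (r / 2) ∈ Ioc 0 r :=
    ⟨lt_min hl.1 (half_pos (hl.1.trans_le hl.2)), (min_le_left _ _).trans hl.2⟩
  by_contra! hge
  obtain ⟨l', hl', hzero : inner ℝ (γ (m - l') - γ m) (γ (m + l') - γ m) = (0 : ℝ)⟩ :=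
    intermediate_value_Icc (min_le_left l (r / 2)) hcont.continuousOn
      ⟨(hsmall hmin (min_le_right _ _)).le, hge⟩
  have hl'r : l' ∈ Ioc 0 r := ⟨hmin.1.trans_le hl'.1, hl'.2.trans hl.2⟩
  have hpos := le_abs_inner_of_wedgeNorm_le hl'r.1.le (hleft hl'r).1 (hright hl'r).1 (hwedge hl'r)
  rw [hzero, abs_zero] at hpos
  exact hpos.not_gt (by have := hl'r.1; positivity)

protected lemma two_mul (h : ChordArc γ a r) (ha : 1 / 2 ≤ a) (hlip : LipschitzWith 1 γ) {ε : ℝ}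
    (hε : ε ≤ 1 / 8) (hflat : ∀ l ∈ Ioc 0 r, FlatAtScale γ ε l) :
    ChordArc γ (a - ε) (2 * r) := by
  intro s t hst
  rcases eq_or_ne s t with rfl | hne
  · simp
  have habs := abs_pos.2 (sub_ne_zero.2 hne)
  wlog hlt : s < t generalizing s t
  · rw [abs_sub_comm, norm_sub_rev] at *
    exact this t s hst hne.symm habs (hne.lt_or_gt.resolve_left hlt)
  obtain ⟨m, l, rfl, rfl⟩ : ∃ m l, s = m - l ∧ t = m + l :=
    ⟨(s + t) / 2, (t - s) / 2, by ring, by ring⟩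
  have habs : |m - l - (m + l)| = 2 * l := by
    rw [abs_sub_comm, abs_of_pos (sub_pos.2 hlt)]
    ring
  rw [habs] at hst ⊢
  have hl : l ∈ Ioc 0 r := ⟨by linarith, by linarith⟩
  have hleft : ‖γ (m - l) - γ m‖ ∈ Icc (a * l) l :=
    h.norm_sub_mem_Icc hlip (by simp [abs_of_pos hl.1]) hl.2
  have hright : ‖γ (m + l) - γ m‖ ∈ Icc (a * l) l :=
    h.norm_sub_mem_Icc hlip (by simp [abs_of_pos hl.1]) hl.2
  have hinner := (h.mono ha).inner_opposite_neg hlip (fun l hl => (hflat l hl).mono hε) m hl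
  rw [← sub_sub_sub_cancel_right _ _ (γ m)]
  exact mul_le_norm_sub_of_inner_neg ha hε hl.1 hleft.1 hright.1
    (hflat l hl m (m - l) (m + l) hleft.2 hright.2) hinner

-- The loss is `C ((2 r) ^ α - r ^ α)`, so that it telescopes under iteration.
lemma sub_mul_rpow_two_mul {C α b : ℝ} (hr : 0 < r) (h : ChordArc γ (b - C * r ^ α) r)
    (hC : 0 ≤ C) (hα : 0 ≤ α) (hb : 5 / 8 ≤ b) (hlip : LipschitzWith 1 γ)
    (hflat : ∀ l ∈ Ioc 0 r, FlatAtScale γ (C * (2 ^ α - 1) * l ^ α) l)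
    (hsmall : C * (2 * r) ^ α ≤ 1 / 8) : ChordArc γ (b - C * (2 * r) ^ α) (2 * r) := by
  have h2α : 0 ≤ (2 : ℝ) ^ α - 1 := sub_nonneg.2 (Real.one_le_rpow one_le_two hα)
  have hdouble : C * (2 * r) ^ α = C * r ^ α + C * (2 ^ α - 1) * r ^ α := by
    rw [Real.mul_rpow two_pos.le hr.le]
    ring
  have hmain : 0 ≤ C * r ^ α := by positivity
  have hloss : 0 ≤ C * (2 ^ α - 1) * r ^ α := by positivity
  rw [hdouble, ← sub_sub]
  refine h.two_mul (by linarith) hlip (by linarith) fun l hl => (hflat l hl).mono ?_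
  obtain ⟨hl0, hlr⟩ := hl
  gcongr

lemma sub_mul_rpow_of_flatAtScale {C α R ρ b : ℝ} (hρ : 0 < ρ) (h : ChordArc γ b ρ)
    (hC : 0 ≤ C) (hα : 0 ≤ α) (hb : 5 / 8 ≤ b) (hlip : LipschitzWith 1 γ) (hR : 0 < R)
    (hflat : ∀ r ∈ Ioc 0 R, FlatAtScale γ (C * (2 ^ α - 1) * r ^ α) r)
    (hCR : C * R ^ α ≤ 1 / 8) : ChordArc γ (b - C * R ^ α) R := by
  have hclimb (N : ℕ) (hN : ChordArc γ (b - C * (R / 2 ^ N) ^ α) (R / 2 ^ N)) :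
      ChordArc γ (b - C * R ^ α) R := by
    induction N with
    | zero => simpa using hN
    | succ N ih =>
      have hr : 0 < R / 2 ^ (N + 1) := by positivity
      have hdouble : 2 * (R / 2 ^ (N + 1)) = R / 2 ^ N := by
        rw [pow_succ]
        field_simp
      have hle : R / 2 ^ N ≤ R := div_le_self hR.le (one_le_pow₀ one_le_two)
      refine ih (hdouble ▸ hN.sub_mul_rpow_two_mul hr hC hα hb hlip
        (fun l hl => hflat l ⟨hl.1, by linarith [hl.2]⟩) ?_)
      exact hCR.trans' (by rw [hdouble]; gcongr)
  obtain ⟨N, hN⟩ := pow_unbounded_of_one_lt (R / ρ) one_lt_two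
  have hNρ : R / 2 ^ N ≤ ρ := by
    rw [div_lt_iff₀ hρ] at hN
    rw [div_le_iff₀' (by positivity)]
    exact hN.le
  exact hclimb N fun s t hst =>
    h.mono (sub_le_self b (by positivity)) s t (hst.trans hNρ)

end Flat

end ChordArc

section Separation

variable {n : ℕ} {γ : ℝ → EuclideanSpace ℝ (Fin n)} {R u v : ℝ}

lemma ChordArc.div_eight_le_norm_sub (h : ChordArc γ (1 / 2) R) (hR : 0 < R)
    (hper : Function.Periodic γ 1) (hinj : InjCircle γ) (hlip : LipschitzWith 1 γ)
    (hflat : ∀ r ∈ Ioc 0 R, FlatAtScale γ (1 / 8) r) (huv : R / 2 ≤ circleDist u v) :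
    R / 8 ≤ ‖γ u - γ v‖ := by
  obtain ⟨s, t, hst, hmin⟩ :=
    exists_forall_dist_le_dist_of_le_circleDist hper hlip.continuous huv
  simp only [dist_eq_norm] at hmin
  refine le_trans ?_ (hmin u v huv)
  by_contra! hlt
  obtain ⟨d, hd⟩ : ∃ d, ‖γ t - γ s‖ = d := ⟨_, rfl⟩
  rw [norm_sub_rev, hd] at hlt hmin
  have hd0 : 0 < d := by
    refine ((norm_nonneg _).trans_eq hd).lt_of_ne' fun hzero => ?_
    have heq := circleDist_eq_zero_iff.2 (hinj s t (norm_sub_eq_zero_iff.1 (hd.trans hzero)).symm)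
    linarith
  have hst' : R < circleDist s t := by
    by_contra! hle
    have := h.mul_circleDist_le hper hle
    rw [norm_sub_rev, hd] at this
    linarith
  have hfar {x : ℝ} (hx : |s - x| = d) : d ≤ ‖γ t - γ s - (γ x - γ s)‖ := by
    rw [sub_sub_sub_cancel_right, norm_sub_rev]
    refine hmin x t ?_
    linarith [circleDist_triangle s x t, circleDist_le_abs_sub s x]
  have hright : ‖γ (s + d) - γ s‖ ∈ Icc (1 / 2 * d) d :=
    h.norm_sub_mem_Icc hlip (by simp [abs_of_pos hd0]) (by linarith)
  have hleft : ‖γ (s - d) - γ s‖ ∈ Icc (1 / 2 * d) d :=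
    h.norm_sub_mem_Icc hlip (by simp [abs_of_pos hd0]) (by linarith)
  have hends : 1 / 2 * (2 * d) ≤ ‖γ (s + d) - γ s - (γ (s - d) - γ s)‖ := by
    rw [sub_sub_sub_cancel_right]
    exact (h.norm_sub_mem_Icc hlip (by rw [abs_of_pos] <;> linarith) (by linarith)).1
  have hwedge := hflat d ⟨hd0, by linarith⟩ s
  rcases exists_norm_sub_lt_of_wedgeNorm_le hd0 (x := γ t - γ s) ⟨by linarith, hd.le⟩ hright hleft
    (hwedge _ _ hd.le hright.2) (hwedge _ _ hd.le hleft.2) (hwedge _ _ hright.2 hleft.2)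
    with hclose | hclose | hclose
  · exact hclose.not_ge (hfar (by simp [abs_of_pos hd0]))
  · exact hclose.not_ge (hfar (by simp [abs_of_pos hd0]))
  · linarith

lemma ChordArc.mul_circleDist_le_norm_sub (h : ChordArc γ (1 / 2) R) (hR : R ∈ Ioc 0 1)
    (hper : Function.Periodic γ 1) (hinj : InjCircle γ) (hlip : LipschitzWith 1 γ)
    (hflat : ∀ r ∈ Ioc 0 R, FlatAtScale γ (1 / 8) r) (u v : ℝ) :
    R / 8 * circleDist u v ≤ ‖γ u - γ v‖ := by
  rcases le_total (R / 2) (circleDist u v) with huv | huv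
  · refine (mul_le_of_le_one_right (by linarith [hR.1]) (circleDist_le_one u v)).trans ?_
    exact h.div_eight_le_norm_sub hR.1 hper hinj hlip hflat huv
  · have h0 : 0 ≤ circleDist u v := circleDist_eq_dist u v ▸ dist_nonneg
    have hR8 : R / 8 ≤ 1 / 2 := by linarith [hR.2]
    exact (by gcongr : _ ≤ 1 / 2 * circleDist u v).trans
      (h.mul_circleDist_le hper (by linarith [hR.1]))

end Separation

section BlowUp

variable {n : ℕ} {p q : ℝ}

lemma exists_mem_Ioc_mul_rpow_le (C : ℝ) {α ε : ℝ} (hα : 0 < α) (hε : 0 < ε) :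
    ∃ R ∈ Ioc (0 : ℝ) 1, C * R ^ α ≤ ε := by
  have h : Tendsto (fun r : ℝ => C * r ^ α) (𝓝[>] 0) (𝓝 (C * 0 ^ α)) :=
    ((Real.continuousAt_rpow_const 0 α (Or.inr hα.le)).const_mul C).tendsto.mono_left
      nhdsWithin_le_nhds
  rw [Real.zero_rpow hα.ne', mul_zero] at h
  exact (Eventually.and (Ioc_mem_nhdsGT one_pos) (h.eventually_le_const hε)).exists

lemma exists_mul_circleDist_le_of_flatAtScale {K α : ℝ} (hK : 0 ≤ K) (hα : 0 < α) :
    ∃ c > 0, ∀ γ : ℝ → EuclideanSpace ℝ (Fin n), ContDiff ℝ 1 γ → Function.Periodic γ 1 →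
      InjCircle γ → LipschitzWith 1 γ → (∀ u, ‖deriv γ u‖ = 1) →
      (∀ r ∈ Ioc 0 1, FlatAtScale γ (K * r ^ α) r) → ∀ u v, c * circleDist u v ≤ ‖γ u - γ v‖ := by
  have h2α : 0 < (2 : ℝ) ^ α - 1 := sub_pos.2 (Real.one_lt_rpow one_lt_two hα)
  obtain ⟨C, hC, rfl⟩ : ∃ C, 0 ≤ C ∧ C * (2 ^ α - 1) = K :=
    ⟨K / (2 ^ α - 1), by positivity, by field_simp⟩
  obtain ⟨R, hR, hCR⟩ := exists_mem_Ioc_mul_rpow_le (C * (2 ^ α - 1) + C) hα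
    (show (0 : ℝ) < 1 / 8 by norm_num)
  have hR0 := hR.1
  have hCR0 : 0 ≤ C * R ^ α := by positivity
  have hKR0 : 0 ≤ C * (2 ^ α - 1) * R ^ α := by positivity
  rw [add_mul] at hCR
  refine ⟨R / 8, by positivity, fun γ hC1 hper hinj hlip harc hflat => ?_⟩
  have hderiv : UniformContinuous (deriv γ) :=
    uniformContinuous_of_periodic (hC1.continuous_deriv le_rfl) fun u => by
      rw [← deriv_comp_add_const, hper.funext]
  obtain ⟨ρ, hρ, hstraight⟩ := ChordArc.exists_of_uniformContinuous_deriv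
    (hC1.differentiable one_ne_zero) hderiv harc (show (3 / 4 : ℝ) < 1 by norm_num)
  have hchord : ChordArc γ (1 / 2) R :=
    (hstraight.sub_mul_rpow_of_flatAtScale hρ hC hα.le (by norm_num) hlip hR0
      (fun r hr => hflat r ⟨hr.1, hr.2.trans hR.2⟩) (by linarith)).mono (by linarith)
  refine hchord.mul_circleDist_le_norm_sub hR hper hinj hlip fun r ⟨hr0, hrR⟩ =>
    (hflat r ⟨hr0, hrR.trans hR.2⟩).mono ?_
  calc C * (2 ^ α - 1) * r ^ α ≤ C * (2 ^ α - 1) * R ^ α := by gcongr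
    _ ≤ 1 / 8 := by linarith

lemma exists_mul_circleDist_le_of_menger_le (hq : 0 < q) (hp : 2 / 3 * q + 1 < p) (M : NNReal) :
    ∃ c > 0, ∀ γ : ℝ → EuclideanSpace ℝ (Fin n), ContDiff ℝ 1 γ → Function.Periodic γ 1 →
      InjCircle γ → (∀ u, ‖deriv γ u‖ = 1) → menger p q γ (deriv γ) ≤ M →
      ∀ u v, c * circleDist u v ≤ ‖γ u - γ v‖ := by
  have hα : 0 < (3 * p - 2 * q - 3) / (3 + q) := div_pos (by linarith) (by linarith)
  obtain ⟨c, hc, hbound⟩ := exists_mul_circleDist_le_of_flatAtScale (n := n)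
    (K := (M * 16 ^ p * 2 ^ q * 8 ^ 3) ^ (3 + q)⁻¹) (by positivity) hα
  refine ⟨c, hc, fun γ hC1 hper hinj harc hM => ?_⟩
  have hlip : LipschitzWith 1 γ :=
    lipschitzWith_of_nnnorm_deriv_le (hC1.differentiable one_ne_zero) fun u => (harc u).le
  exact hbound γ hC1 hper hinj hlip harc fun r hr =>
    flatAtScale_of_menger_le (by linarith) hq hper hlip harc hM hr

theorem energy_blow_up_general {ι : Type*} {l : Filter ι} (hq : 0 < q) (hp : 2 / 3 * q + 1 < p)
    {γ : ι → ℝ → EuclideanSpace ℝ (Fin n)} {γinf : ℝ → EuclideanSpace ℝ (Fin n)}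
    (hC1 : ∀ i, ContDiff ℝ 1 (γ i)) (hper : ∀ i, Function.Periodic (γ i) 1)
    (hinj : ∀ i, InjCircle (γ i)) (harc : ∀ i u, ‖deriv (γ i) u‖ = 1)
    (hnotinj : ¬ InjCircle γinf) (hconv : ∀ u, Tendsto (γ · u) l (𝓝 (γinf u))) :
    Tendsto (fun i => menger p q (γ i) (deriv (γ i))) l (𝓝 ⊤) := by
  simp only [InjCircle, not_forall] at hnotinj
  obtain ⟨u, v, huv, hne⟩ := hnotinj
  have hdist : 0 < circleDist u v :=
    (circleDist_eq_dist u v ▸ dist_nonneg).lt_of_ne' (mt circleDist_eq_zero_iff.1 hne)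
  have hchord : Tendsto (fun i => ‖γ i u - γ i v‖) l (𝓝 0) := by
    simpa [huv] using ((hconv u).sub (hconv v)).norm
  refine ENNReal.tendsto_nhds_top_iff_nnreal.2 fun M => ?_
  obtain ⟨c, hc, hbound⟩ := exists_mul_circleDist_le_of_menger_le (n := n) hq hp M
  filter_upwards [hchord.eventually_lt_const (mul_pos hc hdist)] with i hi
  by_contra! hM
  exact hi.not_ge (hbound (γ i) (hC1 i) (hper i) (hinj i) (harc i) hM u v)

end BlowUp

/-- **Self-repulsion / energy blow-up.** In the sub-critical range, if a
sequence of injective arc-length parametrized closed `C¹` curves converges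
uniformly to a non-injective arc-length parametrized Lipschitz curve, then
the energies blow up: `E_{p,q}(γ_k) → ∞`. -/
theorem energy_blow_up (n : ℕ) (p q : ℝ)
    (hq : 1 < q) (hp₁ : 2/3 * q + 1 < p) (hp₂ : p < q + 2/3)
    (γ : ℕ → ℝ → EuclideanSpace ℝ (Fin n))
    (γinf : ℝ → EuclideanSpace ℝ (Fin n))
    (hC1 : ∀ k, ContDiff ℝ 1 (γ k))
    (hper : ∀ k, Function.Periodic (γ k) 1)
    (hinj : ∀ k, InjCircle (γ k))
    (harc : ∀ k, ∀ u, ‖deriv (γ k) u‖ = 1)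
    (hperinf : Function.Periodic γinf 1)
    (hlip : LipschitzWith 1 γinf)
    (harcinf : ∀ᵐ u : ℝ, ‖deriv γinf u‖ = 1)
    (hnotinj : ¬ InjCircle γinf)
    (hconv : ∀ ε : ℝ, 0 < ε → ∃ N : ℕ, ∀ k ≥ N, ∀ u : ℝ,
      ‖γ k u - γinf u‖ ≤ ε) :
    Tendsto (fun k => menger p q (γ k) (deriv (γ k))) atTop (𝓝 ⊤) := by
  refine energy_blow_up_general (by linarith) hp₁ hC1 hper hinj harc hnotinj fun u => ?_
  refine (atTop_basis.tendsto_iff Metric.nhds_basis_closedBall).2 fun ε hε => ?_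
  obtain ⟨N, hN⟩ := hconv ε hε
  exact ⟨N, trivial, fun k hk => mem_closedBall_iff_norm.2 (hN k hk u)⟩
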